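/- (Noise tolerance of the truncated Catoni's M-estimator composed with softmax cross-entropy.) Let ψ(z, i) = Φ^T_σ(ℓ(z, i)) where ℓ is the softmax cross-entropy loss, and set C = k · log(1 + σ + σ²/2). Suppose Δ := R_ψ(f*) − R_ψ(f) ≤ 0, that C − kΔ > 0, and that the symmetric noise rate satisfies 0 ≤ η < ((1−k)·Δ)/(C − kΔ). Then R^η_ψ(f*) ≤ R^η_ψ(f). -/

import Mathlib

open MeasureTheory Finset

/-- The softmax cross-entropy loss: ℓ(z, i) = log(Σ_j exp(z_j)) − z_i. -/
noncomputable def ceLoss {k : ℕ} (z : Fin k → ℝ) (i : Fin k) : ℝ :=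
  Real.log (∑ j, Real.exp (z j)) - z i

/-- The truncated Catoni's M-estimator with truncation threshold σ. -/
noncomputable def truncCatoni (σ L : ℝ) : ℝ :=
  if L ≤ σ then Real.log (1 + L + L ^ 2 / 2) else Real.log (1 + σ + σ ^ 2 / 2)

/-- The loss ψ: the truncated Catoni's M-estimator composed with softmax
cross-entropy. -/
noncomputable def truncCatoniCE (σ : ℝ) {k : ℕ} (z : Fin k → ℝ) (i : Fin k) : ℝ :=
  truncCatoni σ (ceLoss z i)

/-- The clean ψ-risk. -/
noncomputable def cleanRisk {X : Type*} [MeasurableSpace X] {k : ℕ}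
    (μ : Measure (X × Fin k)) (ψ : (Fin k → ℝ) → Fin k → ℝ) (g : X → Fin k → ℝ) : ℝ :=
  ∫ p, ψ (g p.1) p.2 ∂μ

/-- The ψ-risk under symmetric (uniform) label noise with noise rate η. -/
noncomputable def noisyRisk {X : Type*} [MeasurableSpace X] {k : ℕ}
    (μ : Measure (X × Fin k)) (ψ : (Fin k → ℝ) → Fin k → ℝ) (g : X → Fin k → ℝ)
    (η : ℝ) : ℝ :=
  ∫ p, ((1 - η) * ψ (g p.1) p.2
      + (η / ((k : ℝ) - 1)) * ∑ i ∈ Finset.univ.erase p.2, ψ (g p.1) i) ∂μ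

theorem aux_ceLoss_nonneg {k : ℕ} (z : Fin k → ℝ) (i : Fin k) : 0 ≤ ceLoss z i := by
  unfold ceLoss
  have h : Real.exp (z i) ≤ ∑ j, Real.exp (z j) :=
    Finset.single_le_sum (f := fun j => Real.exp (z j))
      (fun j _ => (Real.exp_pos _).le) (Finset.mem_univ i)
  have h2 := Real.log_le_log (Real.exp_pos _) h
  rw [Real.log_exp] at h2
  linarith

theorem aux_psi_nonneg {k : ℕ} (σ : ℝ) (hσ : 0 < σ) (z : Fin k → ℝ) (i : Fin k) :
    0 ≤ truncCatoniCE σ z i := by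
  have h := aux_ceLoss_nonneg z i
  unfold truncCatoniCE truncCatoni
  split_ifs
  · exact Real.log_nonneg (by nlinarith)
  · exact Real.log_nonneg (by nlinarith)

theorem aux_psi_le {k : ℕ} (σ : ℝ) (z : Fin k → ℝ) (i : Fin k) :
    truncCatoniCE σ z i ≤ Real.log (1 + σ + σ ^ 2 / 2) := by
  have h := aux_ceLoss_nonneg z i
  unfold truncCatoniCE truncCatoni
  split_ifs with h2
  · exact Real.log_le_log (by nlinarith) (by nlinarith)
  · exact le_rfl

theorem aux_int {X : Type*} [MeasurableSpace X] {k : ℕ} (μ : Measure (X × Fin k))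
    (F : X → Fin k → ℝ) (h : ∀ i, Integrable (fun p : X × Fin k => F p.1 i) μ) :
    Integrable (fun p : X × Fin k => F p.1 p.2) μ := by
  have h1 : Integrable (fun p : X × Fin k => ∑ i,
      ({p : X × Fin k | p.2 = i}.indicator (fun p => F p.1 i)) p) μ :=
    integrable_finsetSum _ fun i _ =>
      (h i).indicator (measurable_snd (measurableSet_singleton i))
  refine h1.congr (Filter.Eventually.of_forall fun p => ?_)
  simp [Set.indicator_apply]

theorem aux_noisy {X : Type*} [MeasurableSpace X] {k : ℕ} (μ : Measure (X × Fin k))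
    (ψ : (Fin k → ℝ) → Fin k → ℝ) (g : X → Fin k → ℝ) (η : ℝ)
    (h : ∀ i, Integrable (fun p : X × Fin k => ψ (g p.1) i) μ) :
    noisyRisk μ ψ g η = (1 - η - η / ((k : ℝ) - 1)) * cleanRisk μ ψ g
      + (η / ((k : ℝ) - 1)) * ∫ p, ∑ i, ψ (g p.1) i ∂μ := by
  unfold noisyRisk cleanRisk
  have h1 := aux_int μ (fun x i => ψ (g x) i) h
  have h2 : Integrable (fun p : X × Fin k => ∑ i, ψ (g p.1) i) μ :=
    integrable_finsetSum _ fun i _ => h i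
  rw [← integral_const_mul, ← integral_const_mul,
    ← integral_add (h1.const_mul _) (h2.const_mul _)]
  refine integral_congr_ae (Filter.Eventually.of_forall fun p => ?_)
  have h3 := Finset.add_sum_erase Finset.univ (fun i => ψ (g p.1) i) (Finset.mem_univ p.2)
  simp only at h3 ⊢
  rw [← h3]
  ring

/-- noise tolerance of the truncated Catoni's M-estimator
composed with softmax cross-entropy. With C = k·log(1 + σ + σ²/2),
Δ = R_ψ(f*) − R_ψ(f) ≤ 0, C − kΔ > 0, and symmetric noise rate
0 ≤ η < (1−k)Δ/(C − kΔ), we have R^η_ψ(f*) ≤ R^η_ψ(f). -/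
theorem noise_tolerance_truncCatoniCE {X : Type*} [MeasurableSpace X] {k : ℕ}
    (hk : 2 ≤ k) (μ : Measure (X × Fin k)) [IsProbabilityMeasure μ]
    (f fstar : X → Fin k → ℝ) (σ : ℝ) (hσ : 0 < σ)
    (hintf : ∀ i : Fin k,
      Integrable (fun p : X × Fin k => truncCatoniCE σ (f p.1) i) μ)
    (hintfstar : ∀ i : Fin k,
      Integrable (fun p : X × Fin k => truncCatoniCE σ (fstar p.1) i) μ)
    (C : ℝ) (hC : C = (k : ℝ) * Real.log (1 + σ + σ ^ 2 / 2))
    (Δ : ℝ)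
    (hΔdef : Δ = cleanRisk μ (truncCatoniCE σ) fstar - cleanRisk μ (truncCatoniCE σ) f)
    (hΔ : Δ ≤ 0) (hdenom : 0 < C - (k : ℝ) * Δ)
    (η : ℝ) (hη0 : 0 ≤ η) (hη1 : η < ((1 - (k : ℝ)) * Δ) / (C - (k : ℝ) * Δ)) :
    noisyRisk μ (truncCatoniCE σ) fstar η ≤ noisyRisk μ (truncCatoniCE σ) f η := by
  rw [aux_noisy μ _ _ _ hintf, aux_noisy μ _ _ _ hintfstar]
  have hS0 : 0 ≤ ∫ p, ∑ i, truncCatoniCE σ (f p.1) i ∂μ :=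
    integral_nonneg fun p => Finset.sum_nonneg fun i _ => aux_psi_nonneg σ hσ _ i
  have hS1 : ∫ p, ∑ i, truncCatoniCE σ (fstar p.1) i ∂μ ≤ C := by
    have : ∫ p, ∑ i, truncCatoniCE σ (fstar p.1) i ∂μ ≤ ∫ _p, C ∂μ := by
      refine integral_mono (integrable_finsetSum _ fun i _ => hintfstar i)
        (integrable_const C) fun p => ?_
      rw [hC]
      refine (Finset.sum_le_sum fun i _ => aux_psi_le σ (fstar p.1) i).trans ?_
      simp
    simpa using this
  generalize (∫ p, ∑ i, truncCatoniCE σ (f p.1) i ∂μ) = S at *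
  generalize (∫ p, ∑ i, truncCatoniCE σ (fstar p.1) i ∂μ) = T at *
  have hk1 : (0 : ℝ) < (k : ℝ) - 1 := by
    have : (2 : ℝ) ≤ k := by exact_mod_cast hk
    linarith
  rw [lt_div_iff₀ hdenom] at hη1
  obtain ⟨c, hc⟩ : ∃ c, c = η / ((k : ℝ) - 1) := ⟨_, rfl⟩
  have hc0 : 0 ≤ c := hc ▸ div_nonneg hη0 hk1.le
  have hce : η = c * ((k : ℝ) - 1) := by rw [hc]; field_simp
  rw [← hc]
  have h1 : c * (T - S) ≤ c * C := mul_le_mul_of_nonneg_left (by linarith) hc0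
  have h2 : (1 - η - c) * Δ + c * C ≤ 0 := by
    have h3 : ((k : ℝ) - 1) * ((1 - η - c) * Δ + c * C) ≤ 0 := by
      rw [hce] at hη1 ⊢
      nlinarith
    by_contra hcon
    have := mul_pos hk1 (not_le.mp hcon)
    linarith
  rw [hΔdef] at h2
  linarith
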